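/- The tangent-point energy E is sequentially lower semicontinuous on 𝓜 with respect to weak convergence in H^s(𝕋,ℝⁿ): if γ_k ∈ 𝓜 for all k, γ ∈ 𝓜, and γ_k converges weakly to γ in H^s(𝕋,ℝⁿ), then E(γ) ≤ liminf_{k→∞} E(γ_k). Likewise, E is sequentially lower semicontinuous on 𝓜 with respect to convergence in C¹(𝕋,ℝⁿ). -/

import Mathlib

open MeasureTheory Real Filter Set
open scoped ENNReal Topology RealInnerProductSpace

noncomputable section

/-- Euclidean space `ℝⁿ`. -/
abbrev En (n : ℕ) : Type := EuclideanSpace ℝ (Fin n)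

/-- A fundamental domain for the circle `𝕋 = ℝ/ℤ`. -/
def I01 : Set ℝ := Set.Ico (0 : ℝ) 1

/-- The intrinsic distance on `𝕋 = ℝ/ℤ`, expressed for real representatives. -/
def dT (x y : ℝ) : ℝ := ⨅ k : ℤ, |x - y - (k : ℝ)|

/-- Supremum norm of a (periodic) function on the circle. -/
def supNorm {E : Type*} [NormedAddCommGroup E] (f : ℝ → E) : ℝ := ⨆ x : ℝ, ‖f x‖

/-- The squared Gagliardo seminorm `[v]_{H^σ}²` of a function on the circle, valued in `[0,∞]`. -/
def gagliardoSqE {E : Type*} [NormedAddCommGroup E] (σ : ℝ) (v : ℝ → E) : ℝ≥0∞ :=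
  ∫⁻ x in I01, ∫⁻ y in I01, ENNReal.ofReal (‖v y - v x‖ ^ 2 / dT x y ^ (2 * σ + 1))

/-- Membership in the Sobolev–Slobodeckij space `H^s(𝕋, ℝⁿ)`; for `s ∈ (3/2,2)` such
functions have a `C¹` representative, which we take as the defining data. -/
def InHs {n : ℕ} (s : ℝ) (u : ℝ → En n) : Prop :=
  Function.Periodic u 1 ∧ ContDiff ℝ 1 u ∧ gagliardoSqE (s - 1) (deriv u) < ⊤

/-- The squared `H^s` norm `‖u‖²_{L²} + ‖u'‖²_{L²} + [u']²_{H^{s-1}}`. -/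
def HsNormSq {n : ℕ} (s : ℝ) (u : ℝ → En n) : ℝ :=
  (∫ x in I01, ‖u x‖ ^ 2) + (∫ x in I01, ‖deriv u x‖ ^ 2) +
    (gagliardoSqE (s - 1) (deriv u)).toReal

/-- The `H^s` norm. -/
def HsNorm {n : ℕ} (s : ℝ) (u : ℝ → En n) : ℝ := Real.sqrt (HsNormSq s u)

/-- The `H^s` inner product. -/
def HsInner {n : ℕ} (s : ℝ) (u v : ℝ → En n) : ℝ :=
  (∫ x in I01, ⟪u x, v x⟫) + (∫ x in I01, ⟪deriv u x, deriv v x⟫) +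
    ∫ x in I01, ∫ y in I01,
      ⟪deriv u y - deriv u x, deriv v y - deriv v x⟫ / dT x y ^ (2 * (s - 1) + 1)

/-- The manifold `𝓜` of embedded closed curves of class `H^s`: injective (on the circle)
immersions. -/
def InM {n : ℕ} (s : ℝ) (γ : ℝ → En n) : Prop :=
  InHs s γ ∧ Set.InjOn γ I01 ∧ ∀ x, deriv γ x ≠ 0

/-- The length `L(γ)`. -/
def arcLen {n : ℕ} (γ : ℝ → En n) : ℝ := ∫ x in I01, ‖deriv γ x‖

/-- The arc-length distance `d_γ(x,y)`: the length of the shorter of the two arcs of `γ`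
between `x` and `y`. -/
def arcDist {n : ℕ} (γ : ℝ → En n) (x y : ℝ) : ℝ :=
  ⨅ k : ℤ, |∫ t in x..(y + (k : ℝ)), ‖deriv γ t‖|

/-- Derivative with respect to arc length, `D_γ u = u' / |γ'|`. -/
def Dg {n : ℕ} (γ u : ℝ → En n) (x : ℝ) : En n := ‖deriv γ x‖⁻¹ • deriv u x

/-- `𝒟_γ u (x)`, the pointwise linear map `w ↦ |γ'(x)|⁻² ⟪γ'(x), w⟫ u'(x)`. -/
def DDg {n : ℕ} (γ u : ℝ → En n) (x : ℝ) (w : En n) : En n :=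
  ((‖deriv γ x‖ ^ 2)⁻¹ * ⟪deriv γ x, w⟫) • deriv u x

/-- The operator `R^s_γ`. -/
def Rop {n : ℕ} (s : ℝ) (γ u : ℝ → En n) (x y : ℝ) : En n :=
  (‖γ y - γ x‖ ^ s)⁻¹ • (u y - u x - DDg γ u x (γ y - γ x))

/-- Density of the measure `μ_γ` with respect to `λ ⊗ λ` on `𝕋 × 𝕋`. -/
def muW {n : ℕ} (γ : ℝ → En n) (x y : ℝ) : ℝ :=
  ‖deriv γ x‖ * ‖deriv γ y‖ / ‖γ y - γ x‖

/-- Density of the measure `ν_γ` with respect to `λ ⊗ λ` on `𝕋 × 𝕋`. -/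
def nuW {n : ℕ} (γ : ℝ → En n) (x y : ℝ) : ℝ :=
  ‖deriv γ x‖ * ‖deriv γ y‖ / arcDist γ x y

/-- The tangent-point energy, valued in `[0,∞]`. -/
def EtpE {n : ℕ} (s : ℝ) (γ : ℝ → En n) : ℝ≥0∞ :=
  ∫⁻ x in I01, ∫⁻ y in I01, ENNReal.ofReal (‖Rop s γ γ x y‖ ^ 2 * muW γ x y)

/-- The tangent-point energy, real-valued (finite on `𝓜`). -/
def Etp {n : ℕ} (s : ℝ) (γ : ℝ → En n) : ℝ := (EtpE s γ).toReal

/-- `‖R^s_γ u‖²_{L²(ν_γ)}`, valued in `[0,∞]`. -/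
def RnuSqE {n : ℕ} (s : ℝ) (γ u : ℝ → En n) : ℝ≥0∞ :=
  ∫⁻ x in I01, ∫⁻ y in I01, ENNReal.ofReal (‖Rop s γ u x y‖ ^ 2 * nuW γ x y)

/-- `‖R^s_γ u‖²_{L²(ν_γ)}`, real-valued. -/
def RnuSq {n : ℕ} (s : ℝ) (γ u : ℝ → En n) : ℝ := (RnuSqE s γ u).toReal

/-- The squared `γ`-dependent seminorm `[u]²_{H^s(γ)}`, valued in `[0,∞]`. -/
def gagGammaSqE {n : ℕ} (s : ℝ) (γ u : ℝ → En n) : ℝ≥0∞ :=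
  ∫⁻ x in I01, ∫⁻ y in I01,
    ENNReal.ofReal (‖Dg γ u y - Dg γ u x‖ ^ 2 / arcDist γ x y ^ (2 * (s - 1)) * nuW γ x y)

/-- The squared `γ`-dependent seminorm `[u]²_{H^s(γ)}`, real-valued. -/
def gagGammaSq {n : ℕ} (s : ℝ) (γ u : ℝ → En n) : ℝ := (gagGammaSqE s γ u).toReal

/-- The inner product `⟨u,v⟩_{L²(γ)}`. -/
def innerL2g {n : ℕ} (γ u v : ℝ → En n) : ℝ := ∫ x in I01, ⟪u x, v x⟫ * ‖deriv γ x‖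

/-- The inner product `⟨u,v⟩_{H¹(γ)}`. -/
def innerH1g {n : ℕ} (γ u v : ℝ → En n) : ℝ :=
  ∫ x in I01, ⟪Dg γ u x, Dg γ v x⟫ * ‖deriv γ x‖

/-- The squared `γ`-dependent norm `‖u‖²_{H^s(γ)}`. -/
def HsGammaNormSq {n : ℕ} (s : ℝ) (γ u : ℝ → En n) : ℝ :=
  innerL2g γ u u + innerH1g γ u u + gagGammaSq s γ u

/-- The `γ`-dependent norm `‖u‖_{H^s(γ)}`. -/
def HsGammaNorm {n : ℕ} (s : ℝ) (γ u : ℝ → En n) : ℝ := Real.sqrt (HsGammaNormSq s γ u)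

/-- The bilinear form `B¹_γ`. -/
def B1 {n : ℕ} (s : ℝ) (γ u v : ℝ → En n) : ℝ :=
  ∫ x in I01, ∫ y in I01, ⟪Rop s γ u x y, Rop s γ v x y⟫ * muW γ x y

/-- The bilinear form `B²_γ`. -/
def B2 {n : ℕ} (s : ℝ) (γ u v : ℝ → En n) : ℝ :=
  ∫ x in I01, ∫ y in I01,
    ‖Rop s γ γ x y‖ ^ 2 * (⟪u y - u x, v y - v x⟫ / ‖γ y - γ x‖ ^ 2) * muW γ x y

/-- The bilinear form `B³_γ`. -/
def B3 {n : ℕ} (s : ℝ) (γ u v : ℝ → En n) : ℝ :=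
  ∫ x in I01, ∫ y in I01,
    ‖Rop s γ γ x y‖ ^ 2 * (⟪Dg γ u x, Dg γ v x⟫ + ⟪Dg γ u y, Dg γ v y⟫) * muW γ x y

/-- The Riemannian metric `G_γ(u,v)`. -/
def Gmet {n : ℕ} (s : ℝ) (γ u v : ℝ → En n) : ℝ :=
  2 * B1 s γ u v + (2 * s + 1) * B2 s γ u v + B3 s γ u v + innerH1g γ u v + innerL2g γ u v

/-- The distortion `distor(γ) = sup_{x ≠ y} d_γ(x,y)/|γ(y) − γ(x)|`, valued in `[0,∞]`. -/
def distorE {n : ℕ} (γ : ℝ → En n) : ℝ≥0∞ :=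
  ⨆ (x ∈ I01) (y ∈ I01) (_ : x ≠ y), ENNReal.ofReal (arcDist γ x y / ‖γ y - γ x‖)

/-- The distortion, real-valued. -/
def distor {n : ℕ} (γ : ℝ → En n) : ℝ := (distorE γ).toReal

/-- A `C¹` path `[0,1] → 𝓜 ⊂ H^s(𝕋,ℝⁿ)` (with respect to the `H^s` topology), recorded
together with its velocity field `V`. -/
structure C1Path (s : ℝ) (n : ℕ) where
  Γ : ℝ → ℝ → En n
  V : ℝ → ℝ → En n
  mem : ∀ t ∈ Set.Icc (0 : ℝ) 1, InM s (Γ t)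
  memV : ∀ t ∈ Set.Icc (0 : ℝ) 1, InHs s (V t)
  isDeriv : ∀ t ∈ Set.Icc (0 : ℝ) 1,
    Tendsto (fun h : ℝ => HsNorm s fun x => h⁻¹ • (Γ (t + h) x - Γ t x) - V t x)
      (𝓝[{h : ℝ | t + h ∈ Set.Icc (0 : ℝ) 1 ∧ h ≠ 0}] 0) (𝓝 0)
  contV : ∀ t ∈ Set.Icc (0 : ℝ) 1,
    Tendsto (fun τ : ℝ => HsNorm s fun x => V τ x - V t x) (𝓝[Set.Icc (0 : ℝ) 1] t) (𝓝 0)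

/-- Length of a path with respect to `G`. -/
def pathLen {s : ℝ} {n : ℕ} (P : C1Path s n) : ℝ :=
  ∫ t in (0 : ℝ)..1, Real.sqrt (Gmet s (P.Γ t) (P.V t) (P.V t))

/-- The path (Dirichlet) energy of a path with respect to `G`. -/
def pathEnergy {s : ℝ} {n : ℕ} (P : C1Path s n) : ℝ :=
  (1 / 2) * ∫ t in (0 : ℝ)..1, Gmet s (P.Γ t) (P.V t) (P.V t)

/-- The geodesic distance induced by `G`, valued in `[0,∞]` (`∞` if there is no path). -/
def geodDist (s : ℝ) {n : ℕ} (γ₀ γ₁ : ℝ → En n) : ℝ≥0∞ :=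
  ⨅ (P : C1Path s n) (_ : P.Γ 0 = γ₀ ∧ P.Γ 1 = γ₁), ENNReal.ofReal (pathLen P)

/-- `U ⊆ 𝓜` is bounded with respect to the geodesic distance `d_G`. -/
def GBounded (s : ℝ) {n : ℕ} (U : Set (ℝ → En n)) : Prop :=
  (∀ γ ∈ U, InM s γ) ∧
    ∃ γ₀, InM s γ₀ ∧ ∃ R : ℝ, ∀ γ ∈ U, geodDist s γ γ₀ ≤ ENNReal.ofReal R

/-- Weak convergence in the Hilbert space `H^s(𝕋,ℝⁿ)`. -/
def WeakHsTendsto {n : ℕ} (s : ℝ) (γk : ℕ → ℝ → En n) (γ : ℝ → En n) : Prop :=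
  ∀ v : ℝ → En n, InHs s v →
    Tendsto (fun k => HsInner s (γk k) v) atTop (𝓝 (HsInner s γ v))

/-- Directional derivative of `γ ↦ G_γ(u,v)` at `γ` in direction `w`. -/
def DGdir {n : ℕ} (s : ℝ) (γ w u v : ℝ → En n) : ℝ :=
  deriv (fun t : ℝ => Gmet s (fun x => γ x + t • w x) u v) 0

/-- `F'` is the derivative of the path `F` with respect to the `H^s` norm, on `S`. -/
def IsHsDerivOn {n : ℕ} (s : ℝ) (F F' : ℝ → ℝ → En n) (S : Set ℝ) : Prop :=
  ∀ t ∈ S,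
    Tendsto (fun h : ℝ => HsNorm s fun x => h⁻¹ • (F (t + h) x - F t x) - F' t x)
      (𝓝[{h : ℝ | t + h ∈ S ∧ h ≠ 0}] 0) (𝓝 0)

/-- The path `F` is continuous on `S` with respect to the `H^s` norm. -/
def HsContOn {n : ℕ} (s : ℝ) (F : ℝ → ℝ → En n) (S : Set ℝ) : Prop :=
  ∀ t ∈ S, Tendsto (fun τ : ℝ => HsNorm s fun x => F τ x - F t x) (𝓝[S] t) (𝓝 0)

/-- A solution of the geodesic initial value problem on `[0,∞)`, recorded as a triple
(position `Γ`, velocity `V`, acceleration `W`); the geodesic equation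
`Γ̈ + A_Γ(Γ̇)Γ̇ = 0` is expressed weakly via the Koszul formula for the
Christoffel operator `A`. -/
def GeodesicSol {n : ℕ} (s : ℝ) (γ₀ v₀ : ℝ → En n) (Γ V W : ℝ → ℝ → En n) : Prop :=
  (∀ t ∈ Set.Ici (0 : ℝ), InM s (Γ t) ∧ InHs s (V t) ∧ InHs s (W t)) ∧
  Γ 0 = γ₀ ∧ V 0 = v₀ ∧
  IsHsDerivOn s Γ V (Set.Ici 0) ∧ IsHsDerivOn s V W (Set.Ici 0) ∧
  HsContOn s V (Set.Ici 0) ∧ HsContOn s W (Set.Ici 0) ∧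
  ∀ t ∈ Set.Ici (0 : ℝ), ∀ w : ℝ → En n, InHs s w →
    Gmet s (Γ t) (W t) w + DGdir s (Γ t) (V t) (V t) w
      - (1 / 2) * DGdir s (Γ t) w (V t) (V t) = 0

/-!
The integrand of `E` at `(x, y)` depends only on `γ(x)`, `γ(y)`, `γ'(x)`, `γ'(y)`, and continuously
so where the limit curve is embedded and immersed. By Fatou's lemma, pointwise convergence of the
curves and of their derivatives therefore gives lower semicontinuity. Convergence in `C¹` is
stronger than that. For weak convergence in `H^s` one needs `u ↦ u(x)` and `u ↦ u'(x)` to be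
represented by elements of `H^s`:

* these maps are bounded on `H^s` by Morrey's argument, in which the averages of `u'` over windows
  shrinking to `x` by factors of two differ by a geometric series, controlled by the seminorm
  `[u']_{H^{s-1}}` as soon as `s > 3/2`;
* `H^s` embeds isometrically into `L²(𝕋 × 𝕋)`, and the same bounds turn `L²` limits of its elements
  into uniform limits of functions and derivatives, so that the range is closed and Riesz'
  representation theorem applies.
-/

section DoubleIntegrals

variable {α β : Type*} [MeasurableSpace α] [MeasurableSpace β] {μ : Measure α} {ν : Measure β}

lemma lintegral_lintegral_le_liminf [SFinite ν] {F : ℕ → α → β → ℝ≥0∞} {G : α → β → ℝ≥0∞}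
    (hF : ∀ k, Measurable (Function.uncurry (F k)))
    (hFG : ∀ᵐ x ∂μ, ∀ᵐ y ∂ν, Tendsto (fun k => F k x y) atTop (𝓝 (G x y))) :
    ∫⁻ x, ∫⁻ y, G x y ∂ν ∂μ ≤ liminf (fun k => ∫⁻ x, ∫⁻ y, F k x y ∂ν ∂μ) atTop :=
  calc ∫⁻ x, ∫⁻ y, G x y ∂ν ∂μ
      = ∫⁻ x, ∫⁻ y, liminf (fun k => F k x y) atTop ∂ν ∂μ :=
        lintegral_congr_ae <| hFG.mono fun _ hx =>
          lintegral_congr_ae <| hx.mono fun _ hxy => hxy.liminf_eq.symm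
    _ ≤ ∫⁻ x, liminf (fun k => ∫⁻ y, F k x y ∂ν) atTop ∂μ :=
        lintegral_mono fun _ => lintegral_liminf_le fun k => (hF k).of_uncurry_left
    _ ≤ liminf (fun k => ∫⁻ x, ∫⁻ y, F k x y ∂ν ∂μ) atTop :=
        lintegral_liminf_le fun k => (hF k).lintegral_prod_right'

variable {E : Type*} [NormedAddCommGroup E] [NormedSpace ℝ E]

lemma enorm_integral_sq_le_lintegral [IsProbabilityMeasure μ] {f : α → E}
    (hf : AEStronglyMeasurable f μ) : ‖∫ x, f x ∂μ‖ₑ ^ 2 ≤ ∫⁻ x, ‖f x‖ₑ ^ 2 ∂μ :=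
  calc ‖∫ x, f x ∂μ‖ₑ ^ 2 ≤ eLpNorm f 1 μ ^ 2 := by
        rw [eLpNorm_one_eq_lintegral_enorm]
        gcongr
        exact enorm_integral_le_lintegral_enorm f
    _ ≤ eLpNorm f 2 μ ^ 2 := by
        gcongr
        exact eLpNorm_le_eLpNorm_of_exponent_le one_le_two hf
    _ = ∫⁻ x, ‖f x‖ₑ ^ 2 ∂μ := by
        simpa using eLpNorm_nnreal_pow_eq_lintegral (f := f) (μ := μ) (p := 2) two_ne_zero

variable [CompleteSpace E]

lemma enorm_integral_sub_integral_sq_le {μ ν : Measure α} [IsProbabilityMeasure μ]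
    [IsProbabilityMeasure ν] {f : α → E} (hμ : Integrable f μ) (hν : Integrable f ν) :
    ‖∫ x, f x ∂μ - ∫ y, f y ∂ν‖ₑ ^ 2 ≤ ∫⁻ x, ∫⁻ y, ‖f y - f x‖ₑ ^ 2 ∂ν ∂μ := by
  have sub_const (ρ : Measure α) [IsProbabilityMeasure ρ] (h : Integrable f ρ) (c : E) :
      ‖∫ x, f x ∂ρ - c‖ₑ ^ 2 ≤ ∫⁻ x, ‖f x - c‖ₑ ^ 2 ∂ρ := by
    simpa [integral_sub h (integrable_const c)] using
      enorm_integral_sq_le_lintegral (h.sub (integrable_const c)).aestronglyMeasurable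
  refine (sub_const μ hμ _).trans (lintegral_mono fun x => ?_)
  rw [← enorm_neg, neg_sub]
  exact sub_const ν hν (f x)

lemma enorm_setAverage_sub_setAverage_sq_le {f : α → E} {s t : Set α}
    (hs : μ s ≠ 0) (hs' : μ s ≠ ∞) (ht : μ t ≠ 0) (ht' : μ t ≠ ∞)
    (hfs : IntegrableOn f s μ) (hft : IntegrableOn f t μ) :
    ‖(⨍ x in s, f x ∂μ) - ⨍ y in t, f y ∂μ‖ₑ ^ 2 ≤
      (μ s)⁻¹ * (μ t)⁻¹ * ∫⁻ x in s, ∫⁻ y in t, ‖f y - f x‖ₑ ^ 2 ∂μ ∂μ := by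
  have normalized {u : Set α} (h : μ u ≠ 0) (h' : μ u ≠ ∞) :
      IsProbabilityMeasure ((μ u)⁻¹ • μ.restrict u) :=
    ProbabilityTheory.cond_isProbabilityMeasure_of_finite h h'
  have := normalized hs hs'
  have := normalized ht ht'
  have h := enorm_integral_sub_integral_sq_le (hfs.smul_measure (ENNReal.inv_ne_top.2 hs))
    (hft.smul_measure (ENNReal.inv_ne_top.2 ht))
  simp only [lintegral_smul_measure, smul_eq_mul,
    lintegral_const_mul' _ _ (ENNReal.inv_ne_top.2 ht)] at h
  rw [mul_left_comm, ← mul_assoc] at h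
  rw [setAverage_eq', setAverage_eq']
  exact h

lemma tendsto_setAverage [TopologicalSpace α] {ι : Type*} {l : Filter ι} {f : α → E} {x : α}
    {J : ι → Set α} (hf : ContinuousAt f x) (hJ : Tendsto J l (𝓝 x).smallSets)
    (hJm : ∀ i, MeasurableSet (J i)) (h0 : ∀ i, μ (J i) ≠ 0) (ht : ∀ i, μ (J i) ≠ ∞)
    (hfJ : ∀ i, IntegrableOn f (J i) μ) :
    Tendsto (fun i => ⨍ y in J i, f y ∂μ) l (𝓝 (f x)) := by
  refine Metric.nhds_basis_closedBall.tendsto_right_iff.2 fun ε hε => ?_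
  have near : ∀ᶠ i in l, J i ⊆ f ⁻¹' Metric.closedBall (f x) ε :=
    tendsto_smallSets_iff.1 hJ _ (hf (Metric.closedBall_mem_nhds _ hε))
  filter_upwards [near] with i hi
  exact (convex_closedBall _ _).set_average_mem Metric.isClosed_closedBall (h0 i) (ht i)
    (ae_restrict_of_forall_mem (hJm i) hi) (hfJ i)

end DoubleIntegrals

section Energy

variable {n : ℕ}

lemma tendsto_Rop {γk : ℕ → ℝ → En n} {γ : ℝ → En n} {x y : ℝ} (s : ℝ) (hxy : γ x ≠ γ y)
    (hx : deriv γ x ≠ 0) (h0x : Tendsto (fun k => γk k x) atTop (𝓝 (γ x)))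
    (h0y : Tendsto (fun k => γk k y) atTop (𝓝 (γ y)))
    (h1x : Tendsto (fun k => deriv (γk k) x) atTop (𝓝 (deriv γ x))) :
    Tendsto (fun k => Rop s (γk k) (γk k) x y) atTop (𝓝 (Rop s γ γ x y)) := by
  have chord : Tendsto (fun k => γk k y - γk k x) atTop (𝓝 (γ y - γ x)) := h0y.sub h0x
  have chord_ne : ‖γ y - γ x‖ ≠ 0 := norm_ne_zero_iff.2 (sub_ne_zero.2 hxy.symm)
  have chord_rpow_ne : ‖γ y - γ x‖ ^ s ≠ 0 :=
    (Real.rpow_pos_of_pos (chord_ne.lt_of_le' (norm_nonneg _)) s).ne'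
  have speed_sq_ne : ‖deriv γ x‖ ^ 2 ≠ 0 := pow_ne_zero _ (norm_ne_zero_iff.2 hx)
  exact ((chord.norm.rpow_const (.inl chord_ne)).inv₀ chord_rpow_ne).smul
    (chord.sub ((((h1x.norm.pow 2).inv₀ speed_sq_ne).mul (h1x.inner chord)).smul h1x))

lemma tendsto_muW {γk : ℕ → ℝ → En n} {γ : ℝ → En n} {x y : ℝ} (hxy : γ x ≠ γ y)
    (h0x : Tendsto (fun k => γk k x) atTop (𝓝 (γ x)))
    (h0y : Tendsto (fun k => γk k y) atTop (𝓝 (γ y)))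
    (h1x : Tendsto (fun k => deriv (γk k) x) atTop (𝓝 (deriv γ x)))
    (h1y : Tendsto (fun k => deriv (γk k) y) atTop (𝓝 (deriv γ y))) :
    Tendsto (fun k => muW (γk k) x y) atTop (𝓝 (muW γ x y)) :=
  (h1x.norm.mul h1y.norm).div (h0y.sub h0x).norm (norm_ne_zero_iff.2 (sub_ne_zero.2 hxy.symm))

lemma measurable_tangentPointIntegrand (s : ℝ) {γ : ℝ → En n} (hγ : Measurable γ) :
    Measurable (Function.uncurry fun x y =>
      ENNReal.ofReal (‖Rop s γ γ x y‖ ^ 2 * muW γ x y)) := by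
  unfold Rop muW DDg Function.uncurry
  fun_prop

lemma EtpE_le_liminf_of_tendsto {γk : ℕ → ℝ → En n} {γ : ℝ → En n} (s : ℝ)
    (hk : ∀ k, Measurable (γk k)) (hinj : InjOn γ I01) (hne : ∀ x ∈ I01, deriv γ x ≠ 0)
    (h0 : ∀ x ∈ I01, Tendsto (fun k => γk k x) atTop (𝓝 (γ x)))
    (h1 : ∀ x ∈ I01, Tendsto (fun k => deriv (γk k) x) atTop (𝓝 (deriv γ x))) :
    EtpE s γ ≤ liminf (fun k => EtpE s (γk k)) atTop := by
  refine lintegral_lintegral_le_liminf (fun k => measurable_tangentPointIntegrand s (hk k)) ?_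
  filter_upwards [ae_restrict_mem measurableSet_Ico] with x hx
  filter_upwards [ae_restrict_mem measurableSet_Ico, ae_restrict_of_ae (Measure.ae_ne volume x)]
    with y hy hyx
  have hxy : γ x ≠ γ y := hinj.ne hx hy hyx.symm
  exact (ENNReal.continuous_ofReal.tendsto _).comp <|
    ((tendsto_Rop s hxy (hne x hx) (h0 x hx) (h0 y hy) (h1 x hx)).norm.pow 2).mul
      (tendsto_muW hxy (h0 x hx) (h0 y hy) (h1 x hx) (h1 y hy))

end Energy

section SupNorm

variable {E : Type*} [NormedAddCommGroup E]

lemma norm_le_supNorm {f : ℝ → E} {c : ℝ} (hper : Function.Periodic f c) (hc : c ≠ 0)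
    (hf : Continuous f) (x : ℝ) : ‖f x‖ ≤ supNorm f := by
  obtain ⟨C, hC⟩ := (hper.isBounded_of_continuous hc hf).exists_norm_le
  exact le_ciSup (f := fun y => ‖f y‖) ⟨C, forall_mem_range.2 fun y => hC _ ⟨y, rfl⟩⟩ x

lemma periodic_deriv [NormedSpace ℝ E] {f : ℝ → E} {c : ℝ} (hper : Function.Periodic f c) :
    Function.Periodic (deriv f) c := fun x => by
  rw [← deriv_comp_add_const, hper.funext]

end SupNorm

section HilbertSpace

variable {𝕜 V H : Type*} [RCLike 𝕜] [AddCommGroup V] [Module 𝕜 V] [NormedAddCommGroup H]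
  [InnerProductSpace 𝕜 H] [CompleteSpace H]

lemma exists_eq_inner_of_isClosed_range {J : V →ₗ[𝕜] H}
    (hJ : IsClosed (LinearMap.range J : Set H)) {ℓ : V →ₗ[𝕜] 𝕜} {C : ℝ}
    (hℓ : ∀ u, ‖ℓ u‖ ≤ C * ‖J u‖) : ∃ v, ∀ u, ℓ u = inner 𝕜 (J v) (J u) := by
  have : CompleteSpace (LinearMap.range J) := hJ.completeSpace_coe
  obtain ⟨R, hR⟩ := J.rangeRestrict.exists_rightInverse_of_surjective J.range_rangeRestrict
  have J_R (w : LinearMap.range J) : J (R w) = w := congrArg Subtype.val (LinearMap.congr_fun hR w)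
  let f : StrongDual 𝕜 (LinearMap.range J) := (ℓ ∘ₗ R).mkContinuous C fun w => by
    simpa [J_R] using hℓ (R w)
  have ℓ_R (u : V) : ℓ u = f (J.rangeRestrict u) := by
    have bound := hℓ (u - R (J.rangeRestrict u))
    rw [map_sub J, J_R, show (J.rangeRestrict u : H) = J u from rfl, sub_self, norm_zero, mul_zero,
      norm_le_zero_iff, map_sub, sub_eq_zero] at bound
    exact bound
  refine ⟨R ((InnerProductSpace.toDual 𝕜 _).symm f), fun u => ?_⟩
  rw [ℓ_R, J_R, ← InnerProductSpace.toDual_symm_apply (y := f)]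
  rfl

end HilbertSpace

section Lp

variable {α : Type*} [MeasurableSpace α] {μ : Measure α}

lemma ae_eq_of_tendsto_Lp {E : Type*} [NormedAddCommGroup E] {p : ℝ≥0∞} [Fact (1 ≤ p)]
    [IsFiniteMeasure μ] {f : ℕ → α → E} (hf : ∀ k, MemLp (f k) p μ) {g : α → E} {w : Lp E p μ}
    (hw : Tendsto (fun k => (hf k).toLp (f k)) atTop (𝓝 w))
    (hg : ∀ᵐ x ∂μ, Tendsto (fun k => f k x) atTop (𝓝 (g x))) : w =ᵐ[μ] g :=
  tendstoInMeasure_ae_unique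
    ((tendstoInMeasure_of_tendsto_Lp hw).congr_left fun k => (hf k).coeFn_toLp)
    (tendstoInMeasure_of_tendsto_ae (fun k => (hf k).1) hg)

variable {𝕜 E : Type*} [RCLike 𝕜] [NormedAddCommGroup E] [InnerProductSpace 𝕜 E] {f g : α → E}

lemma inner_toLp (hf : MemLp f 2 μ) (hg : MemLp g 2 μ) :
    inner 𝕜 (hf.toLp f) (hg.toLp g) = ∫ x, inner 𝕜 (f x) (g x) ∂μ := by
  rw [L2.inner_def]
  refine integral_congr_ae ?_
  filter_upwards [hf.coeFn_toLp, hg.coeFn_toLp] with x hfx hgx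
  rw [hfx, hgx]

lemma integrable_inner_of_memLp (hf : MemLp f 2 μ) (hg : MemLp g 2 μ) :
    Integrable (fun x => inner 𝕜 (f x) (g x)) μ := by
  refine (L2.integrable_inner (𝕜 := 𝕜) (hf.toLp f) (hg.toLp g)).congr ?_
  filter_upwards [hf.coeFn_toLp, hg.coeFn_toLp] with x hfx hgx
  rw [hfx, hgx]

end Lp

section UniformLimit

lemma exists_tendstoUniformly_of_dist_le {α X Y : Type*} [PseudoMetricSpace X] [PseudoMetricSpace Y]
    [CompleteSpace Y] {f : ℕ → α → Y} {U : ℕ → X} {C : ℝ} (hU : CauchySeq U)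
    (hf : ∀ k l x, dist (f k x) (f l x) ≤ C * dist (U k) (U l)) :
    ∃ g, TendstoUniformly f g atTop := by
  have cauchy : UniformCauchySeqOn f atTop univ := by
    refine Metric.uniformCauchySeqOn_iff.2 fun ε hε => ?_
    obtain ⟨N, hN⟩ := Metric.cauchySeq_iff.1 hU (ε / (|C| + 1)) (by positivity)
    refine ⟨N, fun k hk l hl x _ => ?_⟩
    have hkl := (lt_div_iff₀ (by positivity)).1 (hN k hk l hl)
    nlinarith [hf k l x, le_abs_self C, dist_nonneg (x := U k) (y := U l)]
  choose g hg using fun x => cauchySeq_tendsto_of_complete (cauchy.cauchySeq (mem_univ x))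
  exact ⟨g, tendstoUniformlyOn_univ.1 <| cauchy.tendstoUniformlyOn_of_tendsto fun x _ => hg x⟩

lemma deriv_eq_and_contDiff_of_tendstoUniformly {𝕜 E ι : Type*} [NontriviallyNormedField 𝕜]
    [IsRCLikeNormedField 𝕜] [NormedAddCommGroup E] [NormedSpace 𝕜 E] {l : Filter ι} [NeBot l]
    {f : ι → 𝕜 → E} {g g' : 𝕜 → E} (hf : ∀ i, ContDiff 𝕜 1 (f i))
    (hg : ∀ x, Tendsto (fun i => f i x) l (𝓝 (g x)))
    (hg' : TendstoUniformly (fun i => deriv (f i)) g' l) : deriv g = g' ∧ ContDiff 𝕜 1 g := by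
  have hasDeriv : ∀ x, HasDerivAt g (g' x) x := hasDerivAt_of_tendstoUniformly hg'
    (.of_forall fun i x => ((hf i).differentiable one_ne_zero x).hasDerivAt) hg
  have deriv_eq : deriv g = g' := funext fun x => (hasDeriv x).deriv
  refine ⟨deriv_eq, contDiff_one_iff_deriv.2 ⟨fun x => (hasDeriv x).differentiableAt, ?_⟩⟩
  exact deriv_eq ▸ hg'.continuous (.of_forall fun i => (hf i).continuous_deriv le_rfl)

end UniformLimit

section Circle

lemma dT_le_abs_sub (x y : ℝ) : dT x y ≤ |x - y| := by
  simpa [dT] using ciInf_le (f := fun k : ℤ => |x - y - k|)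
    ⟨0, forall_mem_range.2 fun _ => abs_nonneg _⟩ 0

lemma dT_nonneg (x y : ℝ) : 0 ≤ dT x y := Real.iInf_nonneg fun _ => abs_nonneg _

lemma dT_pos {x y : ℝ} (hx : x ∈ I01) (hy : y ∈ I01) (hxy : x ≠ y) : 0 < dT x y := by
  have abs_lt_one : |x - y| < 1 := abs_lt.2 ⟨by linarith [hx.1, hy.2], by linarith [hx.2, hy.1]⟩
  have abs_pos : 0 < |x - y| := abs_pos.2 (sub_ne_zero.2 hxy)
  refine (lt_min abs_pos (sub_pos.2 abs_lt_one)).trans_le (le_ciInf fun k => ?_)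
  rcases eq_or_ne k 0 with rfl | hk
  · simp
  · have one_le : (1 : ℝ) ≤ |(k : ℝ)| := mod_cast Int.one_le_abs hk
    have triangle := abs_sub_abs_le_abs_sub (k : ℝ) (x - y)
    rw [abs_sub_comm (k : ℝ) (x - y)] at triangle
    exact (min_le_right _ _).trans (by linarith)

lemma measurable_dT : Measurable fun z : ℝ × ℝ => dT z.1 z.2 :=
  Measurable.iInf fun _ => by fun_prop

instance : IsProbabilityMeasure (volume.restrict I01) := ⟨by simp [I01]⟩

variable {E : Type*} [NormedAddCommGroup E]

lemma norm_le_of_periodic {f : ℝ → E} {C : ℝ} (hper : Function.Periodic f 1)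
    (hC : ∀ x ∈ I01, ‖f x‖ ≤ C) (x : ℝ) : ‖f x‖ ≤ C := by
  obtain ⟨y, hy, hxy⟩ := hper.exists_mem_Ico₀ one_pos x
  exact hxy ▸ hC y hy

end Circle

section Morrey

variable {E : Type*} [NormedAddCommGroup E]

lemma enorm_sub_sq_le {σ L x y : ℝ} (hσ : 0 ≤ 2 * σ + 1) (v : ℝ → E) (hx : x ∈ I01)
    (hy : y ∈ I01) (hL : |x - y| ≤ L) :
    ‖v y - v x‖ₑ ^ 2 ≤
      ENNReal.ofReal (L ^ (2 * σ + 1)) *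
        ENNReal.ofReal (‖v y - v x‖ ^ 2 / dT x y ^ (2 * σ + 1)) := by
  rcases eq_or_ne x y with rfl | hxy
  · simp
  have hd : 0 < dT x y := dT_pos hx hy hxy
  have kernel_le : dT x y ^ (2 * σ + 1) ≤ L ^ (2 * σ + 1) :=
    Real.rpow_le_rpow hd.le ((dT_le_abs_sub x y).trans hL) hσ
  have hL0 : 0 ≤ L := (abs_nonneg _).trans hL
  rw [← ofReal_norm, ← ENNReal.ofReal_pow (norm_nonneg _), ← ENNReal.ofReal_mul (by positivity)]
  refine ENNReal.ofReal_le_ofReal ?_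
  rw [mul_div_assoc', le_div_iff₀ (by positivity), mul_comm]
  gcongr

lemma setLIntegral_enorm_sub_sq_le {σ L : ℝ} (hσ : 0 ≤ 2 * σ + 1) (v : ℝ → E) {J J' : Set ℝ}
    (hJ : J ⊆ I01) (hJ' : J' ⊆ I01) (hJm : MeasurableSet J) (hJm' : MeasurableSet J')
    (hL : ∀ x ∈ J, ∀ y ∈ J', |x - y| ≤ L) :
    ∫⁻ x in J, ∫⁻ y in J', ‖v y - v x‖ₑ ^ 2 ≤
      ENNReal.ofReal (L ^ (2 * σ + 1)) * gagliardoSqE σ v :=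
  calc ∫⁻ x in J, ∫⁻ y in J', ‖v y - v x‖ₑ ^ 2
      ≤ ∫⁻ x in J, ∫⁻ y in J', ENNReal.ofReal (L ^ (2 * σ + 1)) *
          ENNReal.ofReal (‖v y - v x‖ ^ 2 / dT x y ^ (2 * σ + 1)) :=
        setLIntegral_mono' hJm fun x hx => setLIntegral_mono' hJm' fun y hy =>
          enorm_sub_sq_le hσ v (hJ hx) (hJ' hy) (hL x hx y hy)
    _ = ENNReal.ofReal (L ^ (2 * σ + 1)) * ∫⁻ x in J, ∫⁻ y in J',
          ENNReal.ofReal (‖v y - v x‖ ^ 2 / dT x y ^ (2 * σ + 1)) := by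
        simp only [lintegral_const_mul' _ _ ENNReal.ofReal_ne_top]
    _ ≤ ENNReal.ofReal (L ^ (2 * σ + 1)) * gagliardoSqE σ v := by
        gcongr
        exact (lintegral_mono fun x => lintegral_mono_set hJ').trans (lintegral_mono_set hJ)

/-- The image of `[0,1)` under the homothety with centre `x` and ratio `r`. For `x ∈ [0,1)` these
windows shrink to `x` as `r → 0` without leaving `[0,1)`. -/
def window (x r : ℝ) : Set ℝ := Ico (x - r * x) (x - r * x + r)

lemma window_mono {x : ℝ} (hx : x ∈ I01) : Monotone (window x) := fun r r' h =>
  Ico_subset_Ico (by nlinarith [hx.1]) (by nlinarith [hx.2])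

lemma window_one (x : ℝ) : window x 1 = I01 := by simp [window, I01]

lemma measurableSet_window (x r : ℝ) : MeasurableSet (window x r) := measurableSet_Ico

lemma volume_window (x r : ℝ) : volume (window x r) = ENNReal.ofReal r := by simp [window]

lemma abs_sub_le_of_mem_window {x r y z : ℝ} (hy : y ∈ window x r) (hz : z ∈ window x r) :
    |y - z| ≤ r :=
  abs_le.2 ⟨by linarith [hy.1, hz.2], by linarith [hy.2, hz.1]⟩

lemma tendsto_window {ι : Type*} {l : Filter ι} (x : ℝ) {r : ι → ℝ} (hr : Tendsto r l (𝓝 0)) :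
    Tendsto (fun i => window x (r i)) l (𝓝 x).smallSets := by
  have left : Tendsto (fun i => x - r i * x) l (𝓝 x) := by
    simpa using tendsto_const_nhds.sub (hr.mul_const x)
  have right : Tendsto (fun i => x - r i * x + r i) l (𝓝 x) := by simpa using left.add hr
  exact left.Ico right

lemma continuous_integrableOn_I01 {f : ℝ → E} (hf : Continuous f) : IntegrableOn f I01 :=
  hf.integrableOn_Icc.mono_set Ico_subset_Icc_self

variable [NormedSpace ℝ E] [CompleteSpace E]

lemma dist_setAverage_window_le {σ : ℝ} (hσ : 0 ≤ 2 * σ + 1) {v : ℝ → E} (hv : Continuous v)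
    (hG : gagliardoSqE σ v < ⊤) {x r : ℝ} (hx : x ∈ I01) (hr : 0 < r) (hr1 : r ≤ 1) :
    dist (⨍ y in window x r, v y) (⨍ y in window x (r / 2), v y) ≤
      √(2 * (gagliardoSqE σ v).toReal) * r ^ (σ - 1 / 2) := by
  have sub {r' : ℝ} (h : r' ≤ 1) : window x r' ⊆ I01 := window_one x ▸ window_mono hx h
  have half_sub : window x (r / 2) ⊆ window x r := window_mono hx (by linarith)
  have hi {r' : ℝ} (h : r' ≤ 1) : IntegrableOn v (window x r') :=
    (continuous_integrableOn_I01 hv).mono_set (sub h)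
  have average := enorm_setAverage_sub_setAverage_sq_le (μ := volume)
    (s := window x r) (t := window x (r / 2)) (by simpa [volume_window]) (by simp [volume_window])
    (by simpa [volume_window]) (by simp [volume_window]) (hi hr1) (hi (by linarith))
  have energy := setLIntegral_enorm_sub_sq_le hσ v (sub hr1) (sub (by linarith : r / 2 ≤ 1))
    (measurableSet_window x r) (measurableSet_window x (r / 2))
    fun y hy z hz => abs_sub_le_of_mem_window hy (half_sub hz)
  have key := average.trans (mul_le_mul_right energy _)
  rw [volume_window, volume_window, ← ENNReal.ofReal_toReal hG.ne, ← ofReal_norm,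
    ← ENNReal.ofReal_inv_of_pos hr, ← ENNReal.ofReal_inv_of_pos (by positivity),
    ← ENNReal.ofReal_pow (by positivity), ← ENNReal.ofReal_mul (by positivity),
    ← ENNReal.ofReal_mul (by positivity), ← ENNReal.ofReal_mul (by positivity),
    ENNReal.ofReal_le_ofReal_iff (by positivity)] at key
  rw [dist_eq_norm, ← sq_le_sq₀ (by positivity) (by positivity), mul_pow,
    Real.sq_sqrt (by positivity)]
  refine key.trans_eq ?_
  have powers : r ^ (2 * σ + 1) = (r ^ (σ - 1 / 2)) ^ 2 * r ^ 2 := by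
    rw [← Real.rpow_mul_natCast hr.le, ← Real.rpow_add_natCast hr.ne']
    congr 1
    push_cast
    ring
  rw [powers]
  field_simp

lemma norm_sub_integral_le_of_gagliardoSqE_lt_top {σ : ℝ} (hσ : 1 / 2 < σ) {v : ℝ → E}
    (hv : Continuous v) (hG : gagliardoSqE σ v < ⊤) {x : ℝ} (hx : x ∈ I01) :
    ‖v x - ∫ y in I01, v y‖ ≤
      √(2 * (gagliardoSqE σ v).toReal) / (1 - (1 / 2) ^ (σ - 1 / 2)) := by
  let r (i : ℕ) : ℝ := (1 / 2) ^ i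
  have r_pos (i : ℕ) : 0 < r i := by positivity
  have r_le_one (i : ℕ) : r i ≤ 1 := pow_le_one₀ (by norm_num) (by norm_num)
  have r_rpow (i : ℕ) : r i ^ (σ - 1 / 2) = ((1 / 2) ^ (σ - 1 / 2)) ^ i :=
    (Real.rpow_pow_comm (by norm_num) _ _).symm
  have step (i : ℕ) : dist (⨍ y in window x (r i), v y) (⨍ y in window x (r (i + 1)), v y) ≤
      √(2 * (gagliardoSqE σ v).toReal) * ((1 / 2) ^ (σ - 1 / 2)) ^ i := by
    rw [← r_rpow, show r (i + 1) = r i / 2 by simp only [r, pow_succ]; ring]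
    exact dist_setAverage_window_le (by linarith) hv hG hx (r_pos i) (r_le_one i)
  have lim : Tendsto (fun i => ⨍ y in window x (r i), v y) atTop (𝓝 (v x)) :=
    tendsto_setAverage hv.continuousAt
      (tendsto_window x (tendsto_pow_atTop_nhds_zero_of_lt_one (by norm_num) (by norm_num)))
      (fun i => measurableSet_window x _) (fun i => by simpa [volume_window] using r_pos i)
      (fun i => by simp [volume_window]) fun i => (continuous_integrableOn_I01 hv).mono_set <|
        window_one x ▸ window_mono hx (r_le_one i)
  have ratio_lt_one : (1 / 2 : ℝ) ^ (σ - 1 / 2) < 1 :=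
    Real.rpow_lt_one (by norm_num) (by norm_num) (by linarith)
  have total := dist_le_of_le_geometric_of_tendsto₀ _ _ ratio_lt_one step lim
  rwa [dist_comm, dist_eq_norm, show r 0 = 1 from pow_zero _, window_one, average_eq_integral]
    at total

end Morrey

section SobolevJet

/-- The measure `λ ⊗ λ` on `𝕋 × 𝕋`. -/
abbrev torusVolume : Measure (ℝ × ℝ) := (volume.restrict I01).prod (volume.restrict I01)

/-- The fractional difference quotient `(v(y) - v(x)) / d_𝕋(x,y)^(σ+1/2)`, whose `L²` norm on
`𝕋 × 𝕋` is the seminorm `[v]_{H^σ}`. -/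
def fracDiffQuot {E : Type*} [NormedAddCommGroup E] [NormedSpace ℝ E] (σ : ℝ) (v : ℝ → E)
    (z : ℝ × ℝ) : E :=
  (dT z.1 z.2 ^ (σ + 1 / 2))⁻¹ • (v z.2 - v z.1)

lemma dT_rpow_half_mul_self (σ x y : ℝ) :
    dT x y ^ (σ + 1 / 2) * dT x y ^ (σ + 1 / 2) = dT x y ^ (2 * σ + 1) := by
  rw [← sq, ← Real.rpow_mul_natCast (dT_nonneg x y)]
  congr 1
  push_cast
  ring

lemma norm_fracDiffQuot_sq {E : Type*} [NormedAddCommGroup E] [NormedSpace ℝ E] (σ : ℝ)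
    (v : ℝ → E) (z : ℝ × ℝ) :
    ‖fracDiffQuot σ v z‖ ^ 2 = ‖v z.2 - v z.1‖ ^ 2 / dT z.1 z.2 ^ (2 * σ + 1) := by
  rw [fracDiffQuot, norm_smul, mul_pow, norm_inv, inv_pow, Real.norm_eq_abs, sq_abs, sq,
    dT_rpow_half_mul_self, inv_mul_eq_div]

lemma inner_fracDiffQuot {E : Type*} [NormedAddCommGroup E] [InnerProductSpace ℝ E] (σ : ℝ)
    (v w : ℝ → E) (z : ℝ × ℝ) :
    ⟪fracDiffQuot σ v z, fracDiffQuot σ w z⟫ =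
      ⟪v z.2 - v z.1, w z.2 - w z.1⟫ / dT z.1 z.2 ^ (2 * σ + 1) := by
  rw [fracDiffQuot, fracDiffQuot, real_inner_smul_left, real_inner_smul_right, ← mul_assoc,
    ← mul_inv, dT_rpow_half_mul_self, inv_mul_eq_div]

variable {n : ℕ} {s : ℝ}

lemma measurable_fracDiffQuot (σ : ℝ) {v : ℝ → En n} (hv : Measurable v) :
    Measurable (fracDiffQuot σ v) := by
  have := measurable_dT
  unfold fracDiffQuot
  fun_prop

lemma gagliardoSqE_eq_lintegral_fracDiffQuot (σ : ℝ) {v : ℝ → En n} (hv : Measurable v) :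
    gagliardoSqE σ v = ∫⁻ z, ENNReal.ofReal (‖fracDiffQuot σ v z‖ ^ 2) ∂torusVolume := by
  rw [lintegral_prod _
    ((measurable_fracDiffQuot σ hv).norm.pow_const 2).ennreal_ofReal.aemeasurable]
  simp only [norm_fracDiffQuot_sq, gagliardoSqE]

lemma memLp_fracDiffQuot_iff (σ : ℝ) {v : ℝ → En n} (hv : Measurable v) :
    MemLp (fracDiffQuot σ v) 2 torusVolume ↔ gagliardoSqE σ v < ⊤ := by
  have hm := measurable_fracDiffQuot σ hv
  rw [memLp_two_iff_integrable_sq_norm hm.aestronglyMeasurable,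
    gagliardoSqE_eq_lintegral_fracDiffQuot σ hv, lt_top_iff_ne_top,
    lintegral_ofReal_ne_top_iff_integrable (hm.norm.pow_const 2).aestronglyMeasurable
      (.of_forall fun _ => sq_nonneg _)]

lemma toReal_gagliardoSqE (σ : ℝ) {v : ℝ → En n} (hv : Measurable v) :
    (gagliardoSqE σ v).toReal = ∫ z, ‖fracDiffQuot σ v z‖ ^ 2 ∂torusVolume := by
  rw [gagliardoSqE_eq_lintegral_fracDiffQuot σ hv, integral_eq_lintegral_of_nonneg_ae
    (.of_forall fun _ => sq_nonneg _)
    ((measurable_fracDiffQuot σ hv).norm.pow_const 2).aestronglyMeasurable]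

/-- The `L²(𝕋 × 𝕋)` function `(u(x), u'(x), (u'(y) - u'(x)) / d_𝕋(x,y)^(s-1/2))`, through which
`H^s` is isometric to a subspace of `L²`. The first two entries do not depend on `y`; as `𝕋` has
measure one, this does not change their `L²` norms. -/
def sobolevJet (s : ℝ) (u : ℝ → En n) (z : ℝ × ℝ) : PiLp 2 fun _ : Fin 3 => En n :=
  !₂[u z.1, deriv u z.1, fracDiffQuot (s - 1) (deriv u) z]

lemma sobolevJet_add {u v : ℝ → En n} (hu : Differentiable ℝ u) (hv : Differentiable ℝ v) :
    sobolevJet s (u + v) = sobolevJet s u + sobolevJet s v := by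
  have deriv_eq : deriv (u + v) = deriv u + deriv v := funext fun x => deriv_add (hu x) (hv x)
  ext z i : 2
  fin_cases i
  · rfl
  · simp [sobolevJet, deriv_eq]
  · simp [sobolevJet, deriv_eq, fracDiffQuot, add_sub_add_comm]

lemma sobolevJet_smul (c : ℝ) {u : ℝ → En n} (hu : Differentiable ℝ u) :
    sobolevJet s (c • u) = c • sobolevJet s u := by
  have deriv_eq : deriv (c • u) = c • deriv u := funext fun x => deriv_const_smul c (hu x)
  ext z i : 2
  fin_cases i
  · rfl
  · simp [sobolevJet, deriv_eq]
  · simp [sobolevJet, deriv_eq, fracDiffQuot, ← smul_sub, smul_comm c]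

lemma tendsto_sobolevJet {ι : Type*} {l : Filter ι} {f : ι → ℝ → En n} {g : ℝ → En n}
    (h0 : ∀ x, Tendsto (fun i => f i x) l (𝓝 (g x)))
    (h1 : ∀ x, Tendsto (fun i => deriv (f i) x) l (𝓝 (deriv g x))) (z : ℝ × ℝ) :
    Tendsto (fun i => sobolevJet s (f i) z) l (𝓝 (sobolevJet s g z)) := by
  refine ((PiLp.continuous_toLp 2 _).tendsto _).comp (tendsto_pi_nhds.2 fun i => ?_)
  fin_cases i
  · exact h0 z.1
  · exact h1 z.1
  · exact ((h1 z.2).sub (h1 z.1)).const_smul _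

lemma memLp_two_of_continuous {E : Type*} [NormedAddCommGroup E] {f : ℝ → E}
    (hf : Continuous f) : MemLp f 2 (volume.restrict I01) :=
  (memLp_two_iff_integrable_sq_norm hf.aestronglyMeasurable).2
    (continuous_integrableOn_I01 (hf.norm.pow 2))

lemma memLp_sobolevJet_iff {u : ℝ → En n} (hu : ContDiff ℝ 1 u) :
    MemLp (sobolevJet s u) 2 torusVolume ↔ gagliardoSqE (s - 1) (deriv u) < ⊤ := by
  have lift {f : ℝ → En n} (hf : Continuous f) : MemLp (fun z => f z.1) 2 torusVolume :=
    (memLp_two_of_continuous hf).comp_fst _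
  rw [memLp_piLp_iff, ← memLp_fracDiffQuot_iff _ (measurable_deriv u), Fin.forall_fin_succ]
  simp only [Fin.forall_fin_two]
  exact ⟨fun h => h.2.2, fun h => ⟨lift hu.continuous, lift (hu.continuous_deriv le_rfl), h⟩⟩

lemma InHs.memLp_sobolevJet {u : ℝ → En n} (hu : InHs s u) :
    MemLp (sobolevJet s u) 2 torusVolume :=
  (memLp_sobolevJet_iff hu.2.1).2 hu.2.2

lemma InHs.differentiable {u : ℝ → En n} (hu : InHs s u) : Differentiable ℝ u :=
  hu.2.1.differentiable one_ne_zero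

lemma InHs.continuous_deriv {u : ℝ → En n} (hu : InHs s u) : Continuous (deriv u) :=
  hu.2.1.continuous_deriv le_rfl

lemma InHs.add {u v : ℝ → En n} (hu : InHs s u) (hv : InHs s v) : InHs s (u + v) := by
  have smooth : ContDiff ℝ 1 (u + v) := hu.2.1.add hv.2.1
  refine ⟨hu.1.add hv.1, smooth, (memLp_sobolevJet_iff smooth).1 ?_⟩
  rw [sobolevJet_add hu.differentiable hv.differentiable]
  exact hu.memLp_sobolevJet.add hv.memLp_sobolevJet

lemma InHs.smul (c : ℝ) {u : ℝ → En n} (hu : InHs s u) : InHs s (c • u) := by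
  have smooth : ContDiff ℝ 1 (c • u) := hu.2.1.const_smul c
  refine ⟨fun x => by simp [hu.1 x], smooth, (memLp_sobolevJet_iff smooth).1 ?_⟩
  rw [sobolevJet_smul c hu.differentiable]
  exact hu.memLp_sobolevJet.const_smul c

lemma InHs.zero : InHs s (0 : ℝ → En n) :=
  ⟨fun _ => rfl, contDiff_const, by simp [gagliardoSqE, deriv_zero]⟩

/-- The space `H^s(𝕋,ℝⁿ)` as a vector space of `1`-periodic functions. -/
def sobolevSpace (s : ℝ) (n : ℕ) : Submodule ℝ (ℝ → En n) where
  carrier := {u | InHs s u}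
  zero_mem' := InHs.zero
  add_mem' := InHs.add
  smul_mem' := InHs.smul

/-- The embedding of `H^s` into the Hilbert space `L²(𝕋 × 𝕋)` by `sobolevJet`. -/
def sobolevEmbedding (s : ℝ) (n : ℕ) :
    sobolevSpace s n →ₗ[ℝ] Lp (PiLp 2 fun _ : Fin 3 => En n) 2 torusVolume where
  toFun u := (InHs.memLp_sobolevJet u.2).toLp _
  map_add' u v := by
    rw [← MemLp.toLp_add]
    exact MemLp.toLp_congr _ _ <|
      .of_eq <| sobolevJet_add (InHs.differentiable u.2) (InHs.differentiable v.2)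
  map_smul' c u := by
    rw [RingHom.id_apply, ← MemLp.toLp_const_smul]
    exact MemLp.toLp_congr _ _ <| .of_eq <| sobolevJet_smul c (InHs.differentiable u.2)

lemma inner_sobolevEmbedding (u v : sobolevSpace s n) :
    ⟪sobolevEmbedding s n u, sobolevEmbedding s n v⟫ = HsInner s (u : ℝ → En n) v := by
  have hu := InHs.memLp_sobolevJet u.2
  have hv := InHs.memLp_sobolevJet v.2
  have integrable (i : Fin 3) :
      Integrable (fun z => ⟪sobolevJet s u.1 z i, sobolevJet s v.1 z i⟫) torusVolume :=
    integrable_inner_of_memLp (hu.eval_piLp i) (hv.eval_piLp i)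
  have fst (f : ℝ → ℝ) : ∫ z, f z.1 ∂torusVolume = ∫ x in I01, f x := by
    simp [torusVolume, integral_fun_fst]
  calc ⟪sobolevEmbedding s n u, sobolevEmbedding s n v⟫
      = ∑ i, ∫ z, ⟪sobolevJet s u.1 z i, sobolevJet s v.1 z i⟫ ∂torusVolume := by
        rw [← integral_finsetSum _ fun i _ => integrable i]
        exact inner_toLp hu hv
    _ = HsInner s (u : ℝ → En n) v := by
        rw [Fin.sum_univ_three, HsInner]
        congr 1
        · exact congrArg₂ (· + ·) (fst fun x => ⟪u.1 x, v.1 x⟫)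
            (fst fun x => ⟪deriv u.1 x, deriv v.1 x⟫)
        · simp only [← inner_fracDiffQuot _ (deriv u.1) (deriv v.1) (_, _)]
          exact integral_prod _ (integrable 2)

lemma InHs.HsInner_self {u : ℝ → En n} (hu : InHs s u) : HsInner s u u = HsNormSq s u := by
  have integrable : Integrable (fun z => ‖fracDiffQuot (s - 1) (deriv u) z‖ ^ 2) torusVolume :=
    (memLp_two_iff_integrable_sq_norm
      (measurable_fracDiffQuot _ (measurable_deriv u)).aestronglyMeasurable).1
      (hu.memLp_sobolevJet.eval_piLp 2)
  rw [HsNormSq, toReal_gagliardoSqE _ (measurable_deriv u), integral_prod _ integrable]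
  simp only [HsInner, real_inner_self_eq_norm_sq, norm_fracDiffQuot_sq]

lemma norm_sobolevEmbedding (u : sobolevSpace s n) :
    ‖sobolevEmbedding s n u‖ = HsNorm s (u : ℝ → En n) := by
  rw [HsNorm, ← InHs.HsInner_self u.2, ← inner_sobolevEmbedding, real_inner_self_eq_norm_sq,
    Real.sqrt_sq (norm_nonneg _)]

end SobolevJet

section SobolevEmbedding

variable {E : Type*} [NormedAddCommGroup E] [NormedSpace ℝ E] [CompleteSpace E]

lemma norm_setIntegral_sq_le {v : ℝ → E} (hv : Continuous v) :
    ‖∫ x in I01, v x‖ ^ 2 ≤ ∫ x in I01, ‖v x‖ ^ 2 :=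
  (convexOn_univ_norm.pow (fun _ _ => norm_nonneg _) 2).map_integral_le
    (continuous_norm.pow 2).continuousOn isClosed_univ (.of_forall fun _ => mem_univ _)
    (continuous_integrableOn_I01 hv) (continuous_integrableOn_I01 (hv.norm.pow 2))

lemma norm_sub_integral_le_of_norm_deriv_le {u : ℝ → E} {K : ℝ} (hu : Differentiable ℝ u)
    (hK : ∀ x, ‖deriv u x‖ ≤ K) {x : ℝ} (hx : x ∈ I01) : ‖u x - ∫ y in I01, u y‖ ≤ K := by
  have near {y : ℝ} (hy : y ∈ I01) : u y ∈ Metric.closedBall (u x) K := by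
    have mean_value : ‖u y - u x‖ ≤ K * ‖y - x‖ :=
      convex_univ.norm_image_sub_le_of_norm_deriv_le (fun z _ => hu z) (fun z _ => hK z)
        (mem_univ x) (mem_univ y)
    have dist_le_one : ‖y - x‖ ≤ 1 :=
      abs_le.2 ⟨by linarith [hx.2, hy.1], by linarith [hx.1, hy.2]⟩
    exact mem_closedBall_iff_norm.2 <| mean_value.trans <|
      mul_le_of_le_one_right ((norm_nonneg _).trans (hK x)) dist_le_one
  exact mem_closedBall_iff_norm'.1 <| (convex_closedBall (u x) K).integral_mem
    Metric.isClosed_closedBall (ae_restrict_of_forall_mem measurableSet_Ico fun _ => near)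
    (continuous_integrableOn_I01 hu.continuous)

variable {n : ℕ} {s : ℝ}

lemma HsNormSq_summands_le (s : ℝ) (u : ℝ → En n) :
    (∫ x in I01, ‖u x‖ ^ 2) ≤ HsNormSq s u ∧ (∫ x in I01, ‖deriv u x‖ ^ 2) ≤ HsNormSq s u ∧
      (gagliardoSqE (s - 1) (deriv u)).toReal ≤ HsNormSq s u := by
  have h0 : 0 ≤ ∫ x in I01, ‖u x‖ ^ 2 := integral_nonneg fun _ => sq_nonneg _
  have h1 : 0 ≤ ∫ x in I01, ‖deriv u x‖ ^ 2 := integral_nonneg fun _ => sq_nonneg _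
  have h2 : 0 ≤ (gagliardoSqE (s - 1) (deriv u)).toReal := ENNReal.toReal_nonneg
  exact ⟨by rw [HsNormSq]; linarith, by rw [HsNormSq]; linarith, by rw [HsNormSq]; linarith⟩

lemma exists_norm_deriv_le_HsNorm (hs : 3 / 2 < s) :
    ∃ C, ∀ (n : ℕ) (u : ℝ → En n), InHs s u → ∀ x, ‖deriv u x‖ ≤ C * HsNorm s u := by
  refine ⟨1 + √2 / (1 - (1 / 2) ^ (s - 1 - 1 / 2)), fun n u hu =>
    norm_le_of_periodic (periodic_deriv hu.1) fun x hx => ?_⟩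
  obtain ⟨-, sq_deriv_le, seminorm_le⟩ := HsNormSq_summands_le s u
  have ratio_lt_one : (1 / 2 : ℝ) ^ (s - 1 - 1 / 2) < 1 :=
    Real.rpow_lt_one (by norm_num) (by norm_num) (by linarith)
  have mean_le : ‖∫ y in I01, deriv u y‖ ≤ HsNorm s u :=
    Real.le_sqrt_of_sq_le <| (norm_setIntegral_sq_le hu.continuous_deriv).trans sq_deriv_le
  have morrey : ‖deriv u x - ∫ y in I01, deriv u y‖ ≤
      √2 * HsNorm s u / (1 - (1 / 2) ^ (s - 1 - 1 / 2)) := by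
    refine (norm_sub_integral_le_of_gagliardoSqE_lt_top (by linarith) hu.continuous_deriv
      hu.2.2 hx).trans ?_
    rw [HsNorm, ← Real.sqrt_mul zero_le_two]
    gcongr
  calc ‖deriv u x‖ ≤ ‖∫ y in I01, deriv u y‖ + ‖deriv u x - ∫ y in I01, deriv u y‖ :=
        norm_le_insert' _ _
    _ ≤ HsNorm s u + √2 * HsNorm s u / (1 - (1 / 2) ^ (s - 1 - 1 / 2)) := add_le_add mean_le morrey
    _ = (1 + √2 / (1 - (1 / 2) ^ (s - 1 - 1 / 2))) * HsNorm s u := by ring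

lemma exists_norm_le_HsNorm (hs : 3 / 2 < s) :
    ∃ C, ∀ (n : ℕ) (u : ℝ → En n), InHs s u → ∀ x, ‖u x‖ ≤ C * HsNorm s u := by
  obtain ⟨C, hC⟩ := exists_norm_deriv_le_HsNorm hs
  refine ⟨1 + C, fun n u hu => norm_le_of_periodic hu.1 fun x hx => ?_⟩
  have mean_le : ‖∫ y in I01, u y‖ ≤ HsNorm s u :=
    Real.le_sqrt_of_sq_le <|
      (norm_setIntegral_sq_le hu.2.1.continuous).trans (HsNormSq_summands_le s u).1
  have oscillation_le := norm_sub_integral_le_of_norm_deriv_le hu.differentiable (hC n u hu) hx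
  linarith [norm_le_insert' (u x) (∫ y in I01, u y)]

end SobolevEmbedding

section WeakConvergence

variable {n : ℕ} {s : ℝ}

/-- The derivative as a linear map on `H^s`, evaluated at a point. -/
def derivAt (s : ℝ) (n : ℕ) (x : ℝ) : sobolevSpace s n →ₗ[ℝ] En n where
  toFun u := deriv (u : ℝ → En n) x
  map_add' u v := deriv_add (InHs.differentiable u.2 x) (InHs.differentiable v.2 x)
  map_smul' c u := deriv_const_smul c (InHs.differentiable u.2 x)

/-- Point evaluation as a linear map on `H^s`. -/
def evalAt (s : ℝ) (n : ℕ) (x : ℝ) : sobolevSpace s n →ₗ[ℝ] En n :=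
  LinearMap.proj x ∘ₗ (sobolevSpace s n).subtype

lemma isClosed_range_sobolevEmbedding (hs : 3 / 2 < s) :
    IsClosed
      ((sobolevEmbedding s n).range : Set (Lp (PiLp 2 fun _ : Fin 3 => En n) 2 torusVolume)) := by
  refine IsSeqClosed.isClosed fun U w hU hw => ?_
  choose u hu using hU
  have dist_le {T : sobolevSpace s n →ₗ[ℝ] En n} {C : ℝ} (hT : ∀ v, ‖T v‖ ≤ C * HsNorm s v.1)
      (k l : ℕ) : dist (T (u k)) (T (u l)) ≤ C * dist (U k) (U l) := by
    rw [dist_eq_norm, dist_eq_norm, ← hu, ← hu, ← map_sub, ← map_sub, norm_sobolevEmbedding]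
    exact hT _
  obtain ⟨C₀, hC₀⟩ := exists_norm_le_HsNorm hs
  obtain ⟨C₁, hC₁⟩ := exists_norm_deriv_le_HsNorm hs
  obtain ⟨g, hg⟩ := exists_tendstoUniformly_of_dist_le hw.cauchySeq fun k l x =>
    dist_le (T := evalAt s n x) (fun v => hC₀ n v v.2 x) k l
  obtain ⟨g', hg'⟩ := exists_tendstoUniformly_of_dist_le hw.cauchySeq fun k l x =>
    dist_le (T := derivAt s n x) (fun v => hC₁ n v v.2 x) k l
  obtain ⟨rfl, smooth⟩ :=
    deriv_eq_and_contDiff_of_tendstoUniformly (fun k => (u k).2.2.1) hg.tendsto_at hg'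
  have periodic : Function.Periodic g 1 := fun x =>
    tendsto_nhds_unique (hg.tendsto_at (x + 1)) <|
      (hg.tendsto_at x).congr fun k => ((u k).2.1 x).symm
  have w_eq : w =ᵐ[torusVolume] sobolevJet s g :=
    ae_eq_of_tendsto_Lp (fun k => InHs.memLp_sobolevJet (u k).2) (hw.congr fun k => (hu k).symm)
      (.of_forall <| tendsto_sobolevJet hg.tendsto_at hg'.tendsto_at)
  have memLp : MemLp (sobolevJet s g) 2 torusVolume := (memLp_congr_ae w_eq).1 (Lp.memLp w)
  have hgs : InHs s g := ⟨periodic, smooth, (memLp_sobolevJet_iff smooth).1 memLp⟩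
  exact ⟨⟨g, hgs⟩, Lp.ext (memLp.coeFn_toLp.trans w_eq.symm)⟩

lemma exists_eq_HsInner_of_norm_le (hs : 3 / 2 < s) {ℓ : sobolevSpace s n →ₗ[ℝ] ℝ} {C : ℝ}
    (hℓ : ∀ u, ‖ℓ u‖ ≤ C * HsNorm s u.1) : ∃ v, InHs s v ∧ ∀ u, ℓ u = HsInner s u.1 v := by
  simp only [← norm_sobolevEmbedding] at hℓ
  obtain ⟨v, hv⟩ := exists_eq_inner_of_isClosed_range (isClosed_range_sobolevEmbedding hs) hℓ
  refine ⟨v, v.2, fun u => ?_⟩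
  rw [hv, real_inner_comm, inner_sobolevEmbedding]

lemma WeakHsTendsto.tendsto_apply (hs : 3 / 2 < s) {m : ℕ} {γk : ℕ → ℝ → En n} {γ : ℝ → En n}
    (hk : ∀ k, InHs s (γk k)) (hγ : InHs s γ) (h : WeakHsTendsto s γk γ)
    {T : sobolevSpace s n →ₗ[ℝ] En m} {C : ℝ} (hT : ∀ u, ‖T u‖ ≤ C * HsNorm s u.1) :
    Tendsto (fun k => T ⟨γk k, hk k⟩) atTop (𝓝 (T ⟨γ, hγ⟩)) := by
  suffices ofLp : Tendsto (fun k => (T ⟨γk k, hk k⟩).ofLp) atTop (𝓝 (T ⟨γ, hγ⟩).ofLp) from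
    ((PiLp.continuous_toLp 2 _).tendsto _).comp ofLp
  refine tendsto_pi_nhds.2 fun i => ?_
  obtain ⟨v, hv, represents⟩ := exists_eq_HsInner_of_norm_le hs
    (ℓ := (EuclideanSpace.proj i).toLinearMap ∘ₗ T)
    fun u => (PiLp.norm_apply_le (T u) i).trans (hT u)
  have limit := h v hv
  rw [← represents ⟨γ, hγ⟩] at limit
  exact limit.congr fun k => (represents ⟨γk k, hk k⟩).symm

end WeakConvergence

lemma tendsto_of_tendsto_supNorm {E ι : Type*} [NormedAddCommGroup E] {l : Filter ι}
    {f : ι → ℝ → E} {g : ℝ → E} {c : ℝ} (hc : c ≠ 0) (hf : ∀ i, Function.Periodic (f i) c)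
    (hg : Function.Periodic g c) (hfc : ∀ i, Continuous (f i)) (hgc : Continuous g)
    (h : Tendsto (fun i => supNorm fun x => f i x - g x) l (𝓝 0)) (x : ℝ) :
    Tendsto (fun i => f i x) l (𝓝 (g x)) :=
  tendsto_iff_norm_sub_tendsto_zero.2 <| squeeze_zero (fun _ => norm_nonneg _)
    (fun i => norm_le_supNorm ((hf i).sub hg) hc ((hfc i).sub hgc) x) h

theorem statement15_general (s : ℝ) (n : ℕ) :
    (∀ (γk : ℕ → ℝ → En n) (γ : ℝ → En n), 3 / 2 < s → (∀ k, InHs s (γk k)) → InM s γ →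
      WeakHsTendsto s γk γ →
      EtpE s γ ≤ liminf (fun k => EtpE s (γk k)) atTop) ∧
    (∀ (γk : ℕ → ℝ → En n) (γ : ℝ → En n),
      (∀ k, Function.Periodic (γk k) 1) → (∀ k, ContDiff ℝ 1 (γk k)) →
      Function.Periodic γ 1 → ContDiff ℝ 1 γ → InjOn γ I01 → (∀ x ∈ I01, deriv γ x ≠ 0) →
      Tendsto (fun k => supNorm (fun x => γk k x - γ x) +
        supNorm (fun x => deriv (γk k) x - deriv γ x)) atTop (𝓝 0) →
      EtpE s γ ≤ liminf (fun k => EtpE s (γk k)) atTop) := by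
  constructor
  · intro γk γ hs hk ⟨hγ, injective, immersed⟩ weak
    obtain ⟨C₀, eval_le⟩ := exists_norm_le_HsNorm hs
    obtain ⟨C₁, deriv_le⟩ := exists_norm_deriv_le_HsNorm hs
    exact EtpE_le_liminf_of_tendsto s (fun k => (hk k).2.1.continuous.measurable) injective
      (fun x _ => immersed x)
      (fun x _ => weak.tendsto_apply hs hk hγ (T := evalAt s n x) fun u => eval_le n u u.2 x)
      (fun x _ => weak.tendsto_apply hs hk hγ (T := derivAt s n x) fun u => deriv_le n u u.2 x)
  · intro γk γ periodic_k smooth_k periodic smooth injective immersed h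
    have supNorm_nonneg (f : ℝ → En n) : 0 ≤ supNorm f := Real.iSup_nonneg fun _ => norm_nonneg _
    exact EtpE_le_liminf_of_tendsto s (fun k => (smooth_k k).continuous.measurable) injective
      immersed
      (fun x _ => tendsto_of_tendsto_supNorm one_ne_zero periodic_k periodic
        (fun k => (smooth_k k).continuous) smooth.continuous
        (squeeze_zero (fun _ => supNorm_nonneg _)
          (fun _ => le_add_of_nonneg_right (supNorm_nonneg _)) h) x)
      (fun x _ => tendsto_of_tendsto_supNorm one_ne_zero
        (fun k => periodic_deriv (periodic_k k)) (periodic_deriv periodic)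
        (fun k => (smooth_k k).continuous_deriv_one) smooth.continuous_deriv_one
        (squeeze_zero (fun _ => supNorm_nonneg _)
          (fun _ => le_add_of_nonneg_left (supNorm_nonneg _)) h) x)

/-- sequential lower semicontinuity of `E`: if `γ_k ∈ 𝓜` converge to
`γ ∈ 𝓜` weakly in `H^s(𝕋,ℝⁿ)`, then `E(γ) ≤ liminf_k E(γ_k)`; likewise if `γ_k → γ`
in `C¹(𝕋,ℝⁿ)`. -/
theorem statement15 (s : ℝ) (hs : s ∈ Set.Ioo (3 / 2 : ℝ) 2) (n : ℕ) (hn : 2 ≤ n) :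
    (∀ (γk : ℕ → ℝ → En n) (γ : ℝ → En n), (∀ k, InM s (γk k)) → InM s γ →
      WeakHsTendsto s γk γ →
      EtpE s γ ≤ Filter.liminf (fun k => EtpE s (γk k)) atTop) ∧
    (∀ (γk : ℕ → ℝ → En n) (γ : ℝ → En n), (∀ k, InM s (γk k)) → InM s γ →
      Tendsto (fun k => supNorm (fun x => γk k x - γ x) +
        supNorm (fun x => deriv (γk k) x - deriv γ x)) atTop (𝓝 0) →
      EtpE s γ ≤ Filter.liminf (fun k => EtpE s (γk k)) atTop) := by
  exact ⟨fun γk γ hk => (statement15_general s n).1 γk γ hs.1 fun k => (hk k).1,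
    fun γk γ hk hγ => (statement15_general s n).2 γk γ (fun k => (hk k).1.1) (fun k => (hk k).1.2.1)
      hγ.1.1 hγ.1.2.1 hγ.2.1 fun x _ => hγ.2.2 x⟩
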